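/- Let α ∈ [1/2,1), ε ∈ [0,1], and let ρ_AB, σ_AB be classical-quantum states (system A classical for both) or quantum-classical states (system B classical for both) with (1/2)‖ρ_AB - σ_AB‖₁ ≤ ε. Then |H̃_α^↑(A|B)_σ - H̃_α^↑(A|B)_ρ| ≤ log(1+ε) + (1/(1-α)) log(1 + ε^α d_A^{1-α} - ε/(d_A(1+ε))^{1-α}). -/

import Mathlib

open Matrix MeasureTheory
open scoped Kronecker ComplexOrder

noncomputable def mpow {n : Type*} [Fintype n] [DecidableEq n]
    (A : Matrix n n ℂ) (p : ℝ) : Matrix n n ℂ :=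
  if hA : A.IsHermitian then
    (hA.eigenvectorUnitary : Matrix n n ℂ) *
      Matrix.diagonal (fun i => ((hA.eigenvalues i ^ p : ℝ) : ℂ)) *
      (star (hA.eigenvectorUnitary : Matrix n n ℂ))
  else 0

noncomputable def traceNorm {n : Type*} [Fintype n] [DecidableEq n]
    (A : Matrix n n ℂ) : ℝ :=
  (mpow (Aᴴ * A) (1/2)).trace.re

def IsDensity {n : Type*} [Fintype n] [DecidableEq n] (ρ : Matrix n n ℂ) : Prop :=
  ρ.PosSemidef ∧ ρ.trace = 1

noncomputable def sandTr {a b : Type*} [Fintype a] [DecidableEq a] [Fintype b] [DecidableEq b]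
    (α : ℝ) (ρ : Matrix (a × b) (a × b) ℂ) (η : Matrix b b ℂ) : ℝ :=
  (mpow (((1 : Matrix a a ℂ) ⊗ₖ mpow η ((1 - α)/(2*α))) * ρ *
      ((1 : Matrix a a ℂ) ⊗ₖ mpow η ((1 - α)/(2*α)))) α).trace.re

noncomputable def Hcond {a b : Type*} [Fintype a] [DecidableEq a] [Fintype b] [DecidableEq b]
    (α : ℝ) (ρ : Matrix (a × b) (a × b) ℂ) : ℝ :=
  ⨆ η : {η : Matrix b b ℂ // IsDensity η}, (1/(1-α)) * Real.logb 2 (sandTr α ρ η)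

/-- `ρ_AB` is classical on `A` (block diagonal in the standard basis of `A`),
i.e. of the form `Σ_a p(a) |a⟩⟨a| ⊗ ρ_B^a`. -/
def ClassicalA {a b : Type*} (ρ : Matrix (a × b) (a × b) ℂ) : Prop :=
  ∀ p q : a × b, p.1 ≠ q.1 → ρ p q = 0

/-- `ρ_AB` is classical on `B`. -/
def ClassicalB {a b : Type*} (ρ : Matrix (a × b) (a × b) ℂ) : Prop :=
  ∀ p q : a × b, p.2 ≠ q.2 → ρ p q = 0

/-!
Write `Q(X, A) = tr (A ^ s X A ^ s) ^ α` with `s = (1 - α) / (2 α)`. It is subadditive in `X`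
(Rotfel'd) and, for `α ≥ 1 / 2`, jointly superadditive, which by the Carlen–Lieb variational
argument comes down to Lieb's concavity theorem.

Completing the Jordan decomposition of `ρ - σ` gives positive `N`, `N'` of trace `ε`, block diagonal
like `ρ` and `σ`, with `ρ + N = σ + N'`. Classicality enters only through the reduction criterion
`N' ≤ 1 ⊗ N'_B`, which can fail for entangled operators and yields `Q(N', 1 ⊗ N'_B) ≥ ε`. For every
state `η` on `B`, writing `ω = η + N'_B` and `d = d_A`,

  `Q(σ, 1 ⊗ η) + ε ≤ Q(σ + N', 1 ⊗ ω) = Q(ρ + N, 1 ⊗ ω) ≤ Q(ρ, 1 ⊗ ω) + Q(N, 1 ⊗ ω)`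
  `              ≤ S (1 + ε) ^ (1 - α) + ε ^ α (d (1 + ε)) ^ (1 - α)`

with `S = 2 ^ ((1 - α) H(ρ))`. Since the reduction criterion for `ρ` gives `1 ≤ S ≤ d ^ (1 - α)`,
the factor `S` can be pulled out, and taking the supremum over `η` and logarithms gives the bound.
-/

open scoped MatrixOrder Matrix.Norms.L2Operator

section Trace
variable {n : Type*} [Fintype n] {A B : Matrix n n ℂ}

lemma trace_re_nonneg (hA : A.PosSemidef) : 0 ≤ A.trace.re :=
  (Complex.le_def.mp hA.trace_nonneg).1

lemma eq_zero_of_trace_re_eq_zero (hA : A.PosSemidef) (h : A.trace.re = 0) : A = 0 :=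
  hA.trace_eq_zero_iff.mp (Complex.ext h (Complex.le_def.mp hA.trace_nonneg).2.symm)

lemma trace_re_mono (h : A ≤ B) : A.trace.re ≤ B.trace.re := by
  have := trace_re_nonneg (Matrix.le_iff.mp h)
  rwa [Matrix.trace_sub, Complex.sub_re, sub_nonneg] at this

lemma trace_mul_re_mono {X : Matrix n n ℂ} (h : A ≤ B) (hX : X.PosSemidef) :
    (A * X).trace.re ≤ (B * X).trace.re := by
  classical
  obtain ⟨Y, rfl⟩ := CStarAlgebra.nonneg_iff_eq_star_mul_self.mp hX.nonneg
  simp only [← Matrix.mul_assoc, Matrix.trace_mul_comm _ Y]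
  simpa only [← Matrix.mul_assoc, star_star] using
    trace_re_mono (star_left_conjugate_le_conjugate h (star Y))

end Trace

section Power
variable {n : Type*} [Fintype n] [DecidableEq n] {A B : Matrix n n ℂ}

lemma continuousOn_real_spectrum (A : Matrix n n ℂ) (f : ℝ → ℝ) :
    ContinuousOn f (spectrum ℝ A) :=
  Matrix.finite_real_spectrum.continuousOn f

lemma mpow_eq_cfc (hA : A.IsHermitian) (p : ℝ) : mpow A p = cfc (fun x : ℝ => x ^ p) A := by
  rw [hA.cfc_eq, mpow, dif_pos hA]
  rfl

lemma isHermitian_mpow (A : Matrix n n ℂ) (p : ℝ) : (mpow A p).IsHermitian := by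
  by_cases hA : A.IsHermitian
  · rw [mpow_eq_cfc hA]
    exact cfc_predicate _ A
  · rw [mpow, dif_neg hA]
    exact Matrix.isHermitian_zero

lemma mpow_eq_rpow (hA : A.PosSemidef) (p : ℝ) : mpow A p = A ^ p := by
  rw [mpow_eq_cfc hA.isHermitian, CFC.rpow_eq_cfc_real hA.nonneg]

lemma mpow_posSemidef (hA : A.PosSemidef) (p : ℝ) : (mpow A p).PosSemidef := by
  rw [mpow_eq_rpow hA]
  exact CFC.rpow_nonneg.posSemidef

lemma mpow_posDef (hA : A.PosDef) (p : ℝ) : (mpow A p).PosDef := by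
  rw [mpow_eq_rpow hA.posSemidef]
  exact (IsStrictlyPositive.rpow A p hA.isStrictlyPositive).posDef

lemma mpow_one (hA : A.PosSemidef) : mpow A 1 = A := by
  rw [mpow_eq_rpow hA, CFC.rpow_one A hA.nonneg]

lemma mpow_zero (hA : A.PosSemidef) : mpow A 0 = 1 := by
  rw [mpow_eq_rpow hA, CFC.rpow_zero A hA.nonneg]

lemma zero_mpow {p : ℝ} (hp : p ≠ 0) : mpow (0 : Matrix n n ℂ) p = 0 := by
  rw [mpow_eq_rpow .zero]
  exact CFC.zero_rpow hp

lemma mpow_add (hA : A.PosDef) (p q : ℝ) : mpow A (p + q) = mpow A p * mpow A q := by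
  simp only [mpow_eq_rpow hA.posSemidef]
  exact CFC.rpow_add hA.isUnit

lemma mpow_add_of_nonneg (hA : A.PosSemidef) {p q : ℝ} (hp : 0 ≤ p) (hq : 0 ≤ q) :
    mpow A (p + q) = mpow A p * mpow A q := by
  simp only [mpow_eq_cfc hA.isHermitian,
    ← cfc_mul _ _ A (continuousOn_real_spectrum _ _) (continuousOn_real_spectrum _ _)]
  exact cfc_congr fun x hx =>
    Real.rpow_add_of_nonneg (spectrum_nonneg_of_nonneg hA.nonneg hx) hp hq

lemma mpow_mpow (hA : A.PosSemidef) (p q : ℝ) : mpow (mpow A p) q = mpow A (p * q) := by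
  rw [mpow_eq_cfc (mpow_posSemidef hA p).isHermitian, mpow_eq_cfc hA.isHermitian,
    mpow_eq_cfc hA.isHermitian, ← cfc_comp' _ _ A
      ((Matrix.finite_real_spectrum.image _).continuousOn _) (continuousOn_real_spectrum _ _)
      hA.isHermitian.isSelfAdjoint]
  exact cfc_congr fun x hx =>
    (Real.rpow_mul (spectrum_nonneg_of_nonneg hA.nonneg hx) p q).symm

lemma mpow_mul_mpow_neg (hA : A.PosDef) (p : ℝ) : mpow A p * mpow A (-p) = 1 := by
  rw [← mpow_add hA, add_neg_cancel, mpow_zero hA.posSemidef]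

lemma inv_mpow (hA : A.PosDef) (p : ℝ) : (mpow A p)⁻¹ = mpow A (-p) :=
  Matrix.inv_eq_right_inv (mpow_mul_mpow_neg hA p)

lemma mpow_inv (hA : A.PosDef) (p : ℝ) : mpow A⁻¹ p = mpow A (-p) := by
  nth_rw 1 [← mpow_one hA.posSemidef]
  rw [inv_mpow hA, mpow_mpow hA.posSemidef, neg_one_mul]

lemma mpow_smul (hA : A.PosSemidef) {c : ℝ} (hc : 0 ≤ c) (p : ℝ) :
    mpow (c • A) p = c ^ p • mpow A p := by
  rw [mpow_eq_cfc (hA.smul hc).isHermitian, mpow_eq_cfc hA.isHermitian,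
    ← cfc_comp_smul c _ A ((Matrix.finite_real_spectrum.image _).continuousOn _)
      hA.isHermitian.isSelfAdjoint, ← cfc_smul _ _ A (continuousOn_real_spectrum _ _)]
  exact cfc_congr fun x hx => Real.mul_rpow hc (spectrum_nonneg_of_nonneg hA.nonneg hx)

lemma mpow_mono (hA : A.PosSemidef) (h : A ≤ B) {p : ℝ} (hp : p ∈ Set.Icc 0 1) :
    mpow A p ≤ mpow B p := by
  rw [mpow_eq_rpow hA, mpow_eq_rpow (hA.nonneg.trans h).posSemidef]
  exact CFC.rpow_le_rpow hp h

lemma mpow_neg_antitone (hA : A.PosDef) (h : A ≤ B) {p : ℝ} (hp : p ∈ Set.Icc 0 1) :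
    mpow B (-p) ≤ mpow A (-p) := by
  have hB : B.PosSemidef := (hA.posSemidef.nonneg.trans h).posSemidef
  simpa only [← mpow_eq_rpow (mpow_posSemidef hB p),
    ← mpow_eq_rpow (mpow_posSemidef hA.posSemidef p), mpow_mpow hB, mpow_mpow hA.posSemidef,
    mul_neg_one] using CStarAlgebra.rpow_neg_one_le_rpow_neg_one
      (mpow_mono hA.posSemidef h hp) (mpow_posDef hA p).isStrictlyPositive

lemma inv_le_inv_of_le (hA : A.PosDef) (h : A ≤ B) : B⁻¹ ≤ A⁻¹ := by
  have hB : B.PosDef := (hA.isStrictlyPositive.of_le h).posDef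
  rw [← mpow_one hB.inv.posSemidef, ← mpow_one hA.inv.posSemidef, mpow_inv hB, mpow_inv hA]
  exact mpow_neg_antitone hA h ⟨zero_le_one, le_rfl⟩

lemma trace_mpow (hA : A.IsHermitian) (p : ℝ) :
    (mpow A p).trace = ∑ i, ((hA.eigenvalues i ^ p : ℝ) : ℂ) := by
  rw [mpow, dif_pos hA, Matrix.trace_mul_cycle, Unitary.coe_star_mul_self, Matrix.one_mul,
    Matrix.trace_diagonal]

lemma trace_mpow_mul_conjTranspose_self (X : Matrix n n ℂ) (p : ℝ) :
    (mpow (X * Xᴴ) p).trace = (mpow (Xᴴ * X) p).trace := by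
  have hl := Matrix.isHermitian_mul_conjTranspose_self X
  have hr := Matrix.isHermitian_conjTranspose_mul_self X
  have heig : Finset.univ.val.map (fun i => (hl.eigenvalues i : ℂ)) =
      Finset.univ.val.map fun i => (hr.eigenvalues i : ℂ) :=
    hl.roots_charpoly_eq_eigenvalues.symm.trans
      (Matrix.charpoly_mul_comm X Xᴴ ▸ hr.roots_charpoly_eq_eigenvalues)
  have hsum := congrArg (fun s => (s.map fun z : ℂ => ((z.re ^ p : ℝ) : ℂ)).sum) heig
  simp only [Multiset.map_map, Function.comp_def, Complex.ofReal_re] at hsum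
  rw [trace_mpow hl, trace_mpow hr]
  exact hsum

lemma continuous_mpow {X : Type*} [TopologicalSpace X] {a : X → Matrix n n ℂ}
    (ha : Continuous a) (hherm : ∀ x, (a x).IsHermitian) {p : ℝ} (hp : 0 ≤ p) :
    Continuous fun x => mpow (a x) p := by
  simp only [mpow_eq_cfc (hherm _)]
  exact ha.cfc_of_mem_nhdsSet _ (s := Set.univ) Filter.univ_mem
    (fun x => (hherm x).isSelfAdjoint) (Real.continuous_rpow_const hp).continuousOn

lemma one_kronecker_mpow {m : Type*} [Fintype m] [DecidableEq m] (hA : A.PosSemidef) (p : ℝ) :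
    mpow ((1 : Matrix m m ℂ) ⊗ₖ A) p = (1 : Matrix m m ℂ) ⊗ₖ mpow A p := by
  let φ : Matrix n n ℂ →⋆ₐ[ℝ] Matrix (m × n) (m × n) ℂ :=
    { toFun := fun B => (1 : Matrix m m ℂ) ⊗ₖ B
      map_one' := Matrix.one_kronecker_one
      map_mul' := fun B C => by rw [← Matrix.mul_kronecker_mul, Matrix.mul_one]
      map_zero' := Matrix.kronecker_zero _
      map_add' := Matrix.kronecker_add _
      commutes' := fun r => by
        simp only [Algebra.algebraMap_eq_smul_one, Matrix.kronecker_smul,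
          Matrix.one_kronecker_one]
      map_star' := fun B => by
        simp only [Matrix.star_eq_conjTranspose, Matrix.conjTranspose_kronecker,
          Matrix.conjTranspose_one] }
  have hφA : (φ A).PosSemidef := Matrix.PosSemidef.one.kronecker hA
  have hmap := StarAlgHomClass.map_cfc (R := ℝ) φ (fun x => x ^ p) A
    (continuousOn_real_spectrum _ _) φ.toLinearMap.continuous_of_finiteDimensional
    hA.isHermitian.isSelfAdjoint hφA.isHermitian.isSelfAdjoint
  rw [← mpow_eq_cfc hA.isHermitian, ← mpow_eq_cfc hφA.isHermitian] at hmap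
  exact hmap.symm

end Power

section TraceInequality
variable {n : Type*} [Fintype n] [DecidableEq n] {A B : Matrix n n ℂ}

lemma exists_weights_trace_cfc_mul_cfc (hA : A.IsHermitian) (hB : B.IsHermitian) :
    ∃ w : n → n → ℝ, (∀ i j, 0 ≤ w i j) ∧ ∀ f g : ℝ → ℝ, (cfc f A * cfc g B).trace.re =
      ∑ i, ∑ j, w i j * (f (hA.eigenvalues i) * g (hB.eigenvalues j)) := by
  set U : Matrix n n ℂ := (hA.eigenvectorUnitary : Matrix n n ℂ)
  set V : Matrix n n ℂ := (hB.eigenvectorUnitary : Matrix n n ℂ)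
  refine ⟨fun i j => Complex.normSq ((star U * V) i j), fun i j => Complex.normSq_nonneg _,
    fun f g => ?_⟩
  set W := star U * V
  set D : Matrix n n ℂ := Matrix.diagonal fun i => (f (hA.eigenvalues i) : ℂ)
  set E : Matrix n n ℂ := Matrix.diagonal fun j => (g (hB.eigenvalues j) : ℂ)
  have hcfcA : cfc f A = U * D * star U := hA.cfc_eq f
  have hcfcB : cfc g B = V * E * star V := hB.cfc_eq g
  have hrotate : (cfc f A * cfc g B).trace = (D * (W * E * Wᴴ)).trace := by
    rw [hcfcA, hcfcB, Matrix.mul_assoc U, Matrix.mul_assoc U, Matrix.trace_mul_comm]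
    simp only [W, Matrix.conjTranspose_mul, Matrix.star_eq_conjTranspose,
      Matrix.conjTranspose_conjTranspose, Matrix.mul_assoc]
  rw [hrotate]
  simp only [Matrix.trace, Matrix.diag_apply, D, E, Matrix.diagonal_mul,
    Matrix.mul_apply (M := W * _), Matrix.mul_diagonal, Matrix.conjTranspose_apply,
    Complex.re_sum, Finset.mul_sum, Complex.normSq_apply]
  refine Finset.sum_congr rfl fun i _ => Finset.sum_congr rfl fun j _ => ?_
  simp only [Complex.mul_re, Complex.mul_im, Complex.ofReal_re, Complex.ofReal_im,
    RCLike.star_def, Complex.conj_re, Complex.conj_im]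
  ring

/-- Peierls' argument: the eigenbases of `A` and `B` need not agree. -/
lemma trace_cfc_mul_cfc_re_le (hA : A.IsHermitian) (hB : B.IsHermitian) {f g u v : ℝ → ℝ}
    (h : ∀ x ∈ spectrum ℝ A, ∀ y ∈ spectrum ℝ B, f x * g y ≤ u x + v y) :
    (cfc f A * cfc g B).trace.re ≤ (cfc u A).trace.re + (cfc v B).trace.re := by
  obtain ⟨w, hw, htrace⟩ := exists_weights_trace_cfc_mul_cfc hA hB
  have hu := htrace u fun _ => 1
  have hv := htrace (fun _ => 1) v
  rw [cfc_const_one ℝ B, mul_one] at hu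
  rw [cfc_const_one ℝ A, one_mul] at hv
  rw [htrace, hu, hv, ← Finset.sum_add_distrib]
  refine Finset.sum_le_sum fun i _ => ?_
  rw [← Finset.sum_add_distrib]
  refine Finset.sum_le_sum fun j _ => ?_
  rw [← mul_add, mul_one, one_mul]
  exact mul_le_mul_of_nonneg_left
    (h _ (hA.eigenvalues_mem_spectrum_real i) _ (hB.eigenvalues_mem_spectrum_real j)) (hw i j)

lemma trace_mpow_mul_mpow_re_le (hA : A.PosSemidef) (hB : B.PosSemidef) {p q : ℝ} (hp : 0 ≤ p)
    (hq : 0 ≤ q) (hpq : p + q = 1) :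
    (mpow A p * mpow B q).trace.re ≤ p * A.trace.re + q * B.trace.re := by
  have h := trace_cfc_mul_cfc_re_le (f := (· ^ p)) (g := (· ^ q)) (u := fun x => p * x)
    (v := fun y => q * y) hA.isHermitian hB.isHermitian fun x hx y hy =>
      Real.geom_mean_le_arith_mean2_weighted hp hq (spectrum_nonneg_of_nonneg hA.nonneg hx)
        (spectrum_nonneg_of_nonneg hB.nonneg hy) hpq
  simpa [mpow_eq_cfc hA.isHermitian, mpow_eq_cfc hB.isHermitian, cfc_const_mul_id p A,
    cfc_const_mul_id q B] using h

lemma rpow_le_mul_add_rpow {α z b : ℝ} (hα : α ∈ Set.Ioo 0 1) (hz : 0 ≤ z) (hb : 0 < b) :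
    z ^ α ≤ α * (z * b) + (1 - α) * b ^ (-(α / (1 - α))) := by
  obtain ⟨h0, h1⟩ := hα
  have h1' : 0 < 1 - α := sub_pos.mpr h1
  have key := Real.geom_mean_le_arith_mean2_weighted h0.le h1'.le
    (mul_nonneg hz hb.le) (Real.rpow_nonneg hb.le (-(α / (1 - α)))) (by ring)
  have hexp : α + -(α / (1 - α)) * (1 - α) = 0 := by field_simp; ring
  rwa [Real.mul_rpow hz hb.le, ← Real.rpow_mul hb.le, mul_assoc, ← Real.rpow_add hb, hexp,
    Real.rpow_zero, mul_one] at key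

lemma trace_mpow_re_le_trace_mul_add (hA : A.PosSemidef) (hB : B.PosDef) {α : ℝ}
    (hα : α ∈ Set.Ioo 0 1) :
    (mpow A α).trace.re ≤
      α * (A * B).trace.re + (1 - α) * (mpow B (-(α / (1 - α)))).trace.re := by
  have h := trace_cfc_mul_cfc_re_le (f := fun x => -α * x) (g := fun y => y)
    (u := fun x => -1 * x ^ α) (v := fun y => (1 - α) * y ^ (-(α / (1 - α))))
    hA.isHermitian hB.isHermitian fun x hx y hy => by
      linarith [rpow_le_mul_add_rpow hα (spectrum_nonneg_of_nonneg hA.nonneg hx)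
        (hB.isStrictlyPositive.spectrum_pos hy)]
  rw [cfc_const_mul_id (-α) A hA.isHermitian.isSelfAdjoint,
    cfc_id' ℝ B hB.isHermitian.isSelfAdjoint,
    cfc_const_mul (-1) _ A (continuousOn_real_spectrum _ _),
    cfc_const_mul (1 - α) _ B (continuousOn_real_spectrum _ _),
    ← mpow_eq_cfc hA.isHermitian, ← mpow_eq_cfc hB.isHermitian] at h
  simp only [Matrix.smul_mul, Matrix.trace_smul, Complex.smul_re, smul_eq_mul] at h
  linarith

end TraceInequality

section Limit
variable {n : Type*} [DecidableEq n] {X Y : Matrix n n ℂ}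

lemma posDef_add_smul_one (hX : X.PosSemidef) {δ : ℝ} (hδ : 0 < δ) :
    (X + δ • (1 : Matrix n n ℂ)).PosDef :=
  Matrix.PosDef.posSemidef_add hX (Matrix.PosDef.one.smul hδ)

lemma isHermitian_add_smul_one (hX : X.PosSemidef) (δ : ℝ) :
    (X + δ • (1 : Matrix n n ℂ)).IsHermitian :=
  hX.isHermitian.add (Matrix.isHermitian_one.smul (IsSelfAdjoint.all δ))

lemma le_at_zero_of_forall_pos_le {f g : ℝ → ℝ} (hf : Continuous f) (hg : Continuous g)
    (h : ∀ δ, 0 < δ → f δ ≤ g δ) : f 0 ≤ g 0 :=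
  le_on_closure (s := Set.Ioi 0) h hf.continuousOn hg.continuousOn
    (closure_Ioi (0 : ℝ) ▸ Set.self_mem_Ici)

variable [Fintype n]

/-- With `W = X + Y`, antitonicity gives `tr W ^ (α - 1) X ≤ tr X ^ (α - 1) X`, and likewise
for `Y`. -/
lemma trace_mpow_add_re_le_of_posDef (hX : X.PosDef) (hY : Y.PosDef) {α : ℝ}
    (hα : α ∈ Set.Icc 0 1) :
    (mpow (X + Y) α).trace.re ≤ (mpow X α).trace.re + (mpow Y α).trace.re := by
  have hsplit : ∀ {T : Matrix n n ℂ}, T.PosDef → mpow T α = mpow T (-(1 - α)) * T := fun hT => by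
    nth_rw 3 [← mpow_one hT.posSemidef]
    rw [← mpow_add hT, neg_sub, sub_add_cancel]
  have hα' : 1 - α ∈ Set.Icc (0 : ℝ) 1 := ⟨sub_nonneg.mpr hα.2, sub_le_self 1 hα.1⟩
  have hXW : X ≤ X + Y := Matrix.le_iff.mpr (by simpa using hY.posSemidef)
  have hYW : Y ≤ X + Y := Matrix.le_iff.mpr (by simpa using hX.posSemidef)
  rw [hsplit (hX.add hY), hsplit hX, hsplit hY, Matrix.mul_add, Matrix.trace_add, Complex.add_re]
  exact add_le_add (trace_mul_re_mono (mpow_neg_antitone hX hXW hα') hX.posSemidef)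
    (trace_mul_re_mono (mpow_neg_antitone hY hYW hα') hY.posSemidef)

lemma trace_mpow_add_re_le (hX : X.PosSemidef) (hY : Y.PosSemidef) {α : ℝ}
    (hα : α ∈ Set.Icc 0 1) :
    (mpow (X + Y) α).trace.re ≤ (mpow X α).trace.re + (mpow Y α).trace.re := by
  have hcont : ∀ {T : Matrix n n ℂ}, T.PosSemidef →
      Continuous fun δ : ℝ => mpow (T + δ • (1 : Matrix n n ℂ)) α := fun hT =>
    continuous_mpow (by fun_prop) (isHermitian_add_smul_one hT) hα.1
  have hsum : Continuous fun δ : ℝ => mpow (X + δ • (1 : Matrix n n ℂ) + (Y + δ • 1)) α :=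
    continuous_mpow (by fun_prop)
      (fun δ => (isHermitian_add_smul_one hX δ).add (isHermitian_add_smul_one hY δ)) hα.1
  have hcX := hcont hX
  have hcY := hcont hY
  simpa using le_at_zero_of_forall_pos_le
    (Complex.continuous_re.comp hsum.matrix_trace)
    ((Complex.continuous_re.comp hcX.matrix_trace).add
      (Complex.continuous_re.comp hcY.matrix_trace))
    fun δ hδ => trace_mpow_add_re_le_of_posDef (posDef_add_smul_one hX hδ)
      (posDef_add_smul_one hY hδ) hα

end Limit

section SchurComplement
variable {n : Type*} [Fintype n] [DecidableEq n]

/-- Both sides are Schur complements of the positive block matrices `[[T Q⁻¹ Tᴴ, T], [Tᴴ, Q]]`. -/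
lemma add_mul_inv_add_mul_conjTranspose_le {T₁ T₂ Q₁ Q₂ : Matrix n n ℂ}
    (hQ₁ : Q₁.PosDef) (hQ₂ : Q₂.PosDef) :
    (T₁ + T₂) * (Q₁ + Q₂)⁻¹ * (T₁ + T₂)ᴴ ≤ T₁ * Q₁⁻¹ * T₁ᴴ + T₂ * Q₂⁻¹ * T₂ᴴ := by
  have hblock : ∀ (T : Matrix n n ℂ) {Q : Matrix n n ℂ}, Q.PosDef →
      (Matrix.fromBlocks (T * Q⁻¹ * Tᴴ) T Tᴴ Q).PosSemidef := fun T Q hQ => by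
    have := hQ.isUnit.invertible
    rw [Matrix.PosDef.fromBlocks₂₂ _ _ hQ, sub_self]
    exact Matrix.PosSemidef.zero
  have := (hQ₁.add hQ₂).isUnit.invertible
  rw [Matrix.le_iff, ← Matrix.PosDef.fromBlocks₂₂ _ _ (hQ₁.add hQ₂), Matrix.conjTranspose_add,
    ← Matrix.fromBlocks_add]
  exact (hblock T₁ hQ₁).add (hblock T₂ hQ₂)

/-- Conjugating by `Q ^ (-1 / 2)` turns the hypothesis into an inequality between squares. -/
lemma le_of_mul_inv_mul_le {T W Q : Matrix n n ℂ} (hT : T.PosSemidef) (hW : W.PosSemidef)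
    (hQ : Q.PosDef) (h : T * Q⁻¹ * T ≤ W * Q⁻¹ * W) : T ≤ W := by
  set C := mpow Q (-(1 / 2))
  set D := mpow Q (1 / 2)
  have hC : IsSelfAdjoint C := isHermitian_mpow Q _
  have hDC : D * C = 1 := mpow_mul_mpow_neg hQ _
  have hCD : C * D = 1 := mul_eq_one_comm.mp hDC
  have hCC : C * C = Q⁻¹ := by
    rw [← mpow_one hQ.inv.posSemidef, mpow_inv hQ, ← mpow_add hQ]
    norm_num
  have hsq : ∀ S : Matrix n n ℂ, C * (S * Q⁻¹ * S) * C = C * S * C * (C * S * C) := fun S => by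
    simp only [← hCC, Matrix.mul_assoc]
  have hpos : ∀ {S : Matrix n n ℂ}, S.PosSemidef → 0 ≤ C * S * C := fun hS =>
    hC.conjugate_nonneg hS.nonneg
  have hroot : C * T * C ≤ C * W * C := by
    have h' := CFC.sqrt_le_sqrt _ _ (hC.conjugate_le_conjugate h)
    rwa [hsq, hsq, CFC.sqrt_mul_self _ (hpos hT), CFC.sqrt_mul_self _ (hpos hW)] at h'
  have hcancel : ∀ S : Matrix n n ℂ, D * (C * S * C) * D = S := fun S => by
    rw [show D * (C * S * C) * D = D * C * S * (C * D) by simp only [Matrix.mul_assoc], hDC, hCD,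
      Matrix.one_mul, Matrix.mul_one]
  have hD : IsSelfAdjoint D := isHermitian_mpow Q _
  have h' := hD.conjugate_le_conjugate hroot
  rwa [hcancel, hcancel] at h'

end SchurComplement

section KroneckerGeomMean
variable {m n : Type*} [Fintype m] [DecidableEq m] [Fintype n] [DecidableEq n]
  {A A₁ A₂ : Matrix n n ℂ} {Z Z₁ Z₂ : Matrix m m ℂ}

/-- The weighted geometric mean `Z ^ (1 - p) ⊗ A ^ p` of the commuting operators `Z ⊗ 1` and
`1 ⊗ A`, whose concavity is Ando's form of Lieb's theorem. -/
noncomputable def kroneckerGeomMean (Z : Matrix m m ℂ) (A : Matrix n n ℂ) (p : ℝ) :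
    Matrix (m × n) (m × n) ℂ :=
  mpow Z (1 - p) ⊗ₖ mpow A p

lemma kroneckerGeomMean_posDef (hZ : Z.PosDef) (hA : A.PosDef) (p : ℝ) :
    (kroneckerGeomMean Z A p).PosDef :=
  (mpow_posDef hZ _).kronecker (mpow_posDef hA _)

lemma kroneckerGeomMean_zero (hZ : Z.PosSemidef) (hA : A.PosSemidef) :
    kroneckerGeomMean Z A 0 = Z ⊗ₖ 1 := by
  rw [kroneckerGeomMean, sub_zero, mpow_one hZ, mpow_zero hA]

lemma kroneckerGeomMean_one (hZ : Z.PosSemidef) (hA : A.PosSemidef) :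
    kroneckerGeomMean Z A 1 = 1 ⊗ₖ A := by
  rw [kroneckerGeomMean, sub_self, mpow_zero hZ, mpow_one hA]

lemma kroneckerGeomMean_midpoint_mul_inv_mul (hZ : Z.PosDef) (hA : A.PosDef) (p q : ℝ) :
    kroneckerGeomMean Z A ((p + q) / 2) * (kroneckerGeomMean Z A q)⁻¹ *
      kroneckerGeomMean Z A ((p + q) / 2) = kroneckerGeomMean Z A p := by
  rw [kroneckerGeomMean, kroneckerGeomMean, kroneckerGeomMean, Matrix.inv_kronecker,
    ← Matrix.mul_kronecker_mul, ← Matrix.mul_kronecker_mul, inv_mpow hZ, inv_mpow hA, ← mpow_add hZ,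
    ← mpow_add hZ, ← mpow_add hA, ← mpow_add hA]
  congr 2 <;> ring

lemma continuous_mpow_exponent (hA : A.PosDef) : Continuous fun p : ℝ => mpow A p := by
  simp only [mpow, dif_pos hA.isHermitian]
  have hpow : ∀ i, Continuous fun p : ℝ => ((hA.isHermitian.eigenvalues i ^ p : ℝ) : ℂ) :=
    fun i => Complex.continuous_ofReal.comp
      (Real.continuous_const_rpow (hA.eigenvalues_pos i).ne')
  exact (continuous_const.matrix_mul (continuous_pi hpow).matrix_diagonal).matrix_mul
    continuous_const

lemma continuous_kroneckerGeomMean (hZ : Z.PosDef) (hA : A.PosDef) :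
    Continuous (kroneckerGeomMean Z A) := by
  have hZc := (continuous_mpow_exponent hZ).comp (continuous_sub_left (1 : ℝ))
  exact continuous_matrix fun i j =>
    (hZc.matrix_elem _ _).mul ((continuous_mpow_exponent hA).matrix_elem _ _)

lemma Icc_subset_of_midpoint_mem {S : Set ℝ} (hS : IsClosed S)
    (hmid : ∀ x ∈ S, ∀ y ∈ S, (x + y) / 2 ∈ S) {a b : ℝ} (ha : a ∈ S) (hb : b ∈ S) :
    Set.Icc a b ⊆ S := by
  intro p hp
  by_contra hpS
  obtain ⟨x, ⟨hxS, hxp⟩, hxmax⟩ := (isCompact_Icc.inter_left hS).exists_isGreatest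
    ⟨a, ha, Set.left_mem_Icc.mpr hp.1⟩
  obtain ⟨y, ⟨hyS, hyp⟩, hymin⟩ := (isCompact_Icc.inter_left hS).exists_isLeast
    ⟨b, hb, Set.right_mem_Icc.mpr hp.2⟩
  have hx : x < p := hxp.2.lt_of_ne fun h => hpS (h ▸ hxS)
  have hy : p < y := hyp.1.lt_of_ne fun h => hpS (h ▸ hyS)
  rcases le_total ((x + y) / 2) p with h | h
  · linarith [hxmax ⟨hmid x hxS y hyS, by linarith [hxp.1], h⟩]
  · linarith [hymin ⟨hmid x hxS y hyS, h, by linarith [hyp.2]⟩]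

/-- Ando's argument: the set of exponents for which the inequality holds is closed under
midpoints. -/
lemma kroneckerGeomMean_add_le (hZ₁ : Z₁.PosDef) (hZ₂ : Z₂.PosDef) (hA₁ : A₁.PosDef)
    (hA₂ : A₂.PosDef) {p : ℝ} (hp : p ∈ Set.Icc 0 1) :
    kroneckerGeomMean Z₁ A₁ p + kroneckerGeomMean Z₂ A₂ p ≤
      kroneckerGeomMean (Z₁ + Z₂) (A₁ + A₂) p := by
  have hZ := hZ₁.add hZ₂
  have hA := hA₁.add hA₂
  have hsum : ∀ q, (kroneckerGeomMean Z₁ A₁ q + kroneckerGeomMean Z₂ A₂ q).PosDef := fun q =>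
    (kroneckerGeomMean_posDef hZ₁ hA₁ q).add (kroneckerGeomMean_posDef hZ₂ hA₂ q)
  refine Icc_subset_of_midpoint_mem (S := {q | kroneckerGeomMean Z₁ A₁ q +
    kroneckerGeomMean Z₂ A₂ q ≤ kroneckerGeomMean (Z₁ + Z₂) (A₁ + A₂) q})
    (isClosed_le ((continuous_kroneckerGeomMean hZ₁ hA₁).add
      (continuous_kroneckerGeomMean hZ₂ hA₂)) (continuous_kroneckerGeomMean hZ hA))
    (fun q hq r hr => ?_) ?_ ?_ hp
  · have hT := (hsum ((q + r) / 2)).posSemidef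
    refine le_of_mul_inv_mul_le hT (kroneckerGeomMean_posDef hZ hA _).posSemidef
      (kroneckerGeomMean_posDef hZ hA r) ?_
    set T := kroneckerGeomMean Z₁ A₁ ((q + r) / 2) + kroneckerGeomMean Z₂ A₂ ((q + r) / 2)
    set R := kroneckerGeomMean Z₁ A₁ r + kroneckerGeomMean Z₂ A₂ r
    calc T * (kroneckerGeomMean (Z₁ + Z₂) (A₁ + A₂) r)⁻¹ * T ≤ T * R⁻¹ * T := by
          exact IsSelfAdjoint.conjugate_le_conjugate (inv_le_inv_of_le (hsum r) hr)
            hT.isHermitian.isSelfAdjoint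
      _ ≤ kroneckerGeomMean Z₁ A₁ q + kroneckerGeomMean Z₂ A₂ q := by
          have h := add_mul_inv_add_mul_conjTranspose_le
            (T₁ := kroneckerGeomMean Z₁ A₁ ((q + r) / 2))
            (T₂ := kroneckerGeomMean Z₂ A₂ ((q + r) / 2))
            (kroneckerGeomMean_posDef hZ₁ hA₁ r) (kroneckerGeomMean_posDef hZ₂ hA₂ r)
          rwa [hT.isHermitian.eq, (kroneckerGeomMean_posDef hZ₁ hA₁ _).isHermitian.eq,
            (kroneckerGeomMean_posDef hZ₂ hA₂ _).isHermitian.eq,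
            kroneckerGeomMean_midpoint_mul_inv_mul hZ₁ hA₁,
            kroneckerGeomMean_midpoint_mul_inv_mul hZ₂ hA₂] at h
      _ ≤ _ := by
          rw [kroneckerGeomMean_midpoint_mul_inv_mul hZ hA]
          exact hq
  · simp only [Set.mem_ofPred_eq, kroneckerGeomMean_zero, hZ₁.posSemidef, hZ₂.posSemidef,
      hA₁.posSemidef, hA₂.posSemidef, hZ.posSemidef, hA.posSemidef, Matrix.add_kronecker, le_refl]
  · simp only [Set.mem_ofPred_eq, kroneckerGeomMean_one, hZ₁.posSemidef, hZ₂.posSemidef,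
      hA₁.posSemidef, hA₂.posSemidef, hZ.posSemidef, hA.posSemidef, Matrix.kronecker_add, le_refl]

lemma mpow_transpose (hA : A.PosSemidef) (p : ℝ) : mpow Aᵀ p = (mpow A p)ᵀ := by
  let φ : Matrix n n ℂ →⋆ₐ[ℝ] Matrix n n ℂ :=
    { Complex.conjAe.toAlgHom.mapMatrix with
      map_star' := fun B => by
        ext
        simp [Matrix.star_eq_conjTranspose] }
  have hφ : ∀ {T : Matrix n n ℂ}, T.IsHermitian → φ T = Tᵀ := fun {T} hT => by
    nth_rw 2 [← hT.eq]
    ext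
    simp [φ]
  have hmap := StarAlgHomClass.map_cfc (R := ℝ) φ (fun x => x ^ p) A
    (continuousOn_real_spectrum _ _) φ.toLinearMap.continuous_of_finiteDimensional
    hA.isHermitian.isSelfAdjoint (hφ hA.isHermitian ▸ hA.transpose.isHermitian.isSelfAdjoint)
  rw [hφ hA.isHermitian, ← mpow_eq_cfc hA.isHermitian, hφ (isHermitian_mpow A p),
    ← mpow_eq_cfc hA.transpose.isHermitian] at hmap
  exact hmap.symm

lemma trace_lieb_superadditive (hZ₁ : Z₁.PosDef) (hZ₂ : Z₂.PosDef) (hA₁ : A₁.PosDef)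
    (hA₂ : A₂.PosDef) (K : Matrix n m ℂ) {p : ℝ} (hp : p ∈ Set.Icc 0 1) :
    (Kᴴ * mpow A₁ p * K * mpow Z₁ (1 - p)).trace.re +
        (Kᴴ * mpow A₂ p * K * mpow Z₂ (1 - p)).trace.re ≤
      (Kᴴ * mpow (A₁ + A₂) p * K * mpow (Z₁ + Z₂) (1 - p)).trace.re := by
  have hando := Matrix.le_iff.mp
    (kroneckerGeomMean_add_le hZ₁.transpose hZ₂.transpose hA₁ hA₂ hp)
  simp only [kroneckerGeomMean, ← Matrix.transpose_add, mpow_transpose hZ₁.posSemidef,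
    mpow_transpose hZ₂.posSemidef, mpow_transpose (hZ₁.add hZ₂).posSemidef] at hando
  have hvec := (Complex.le_def.mp (hando.dotProduct_mulVec_nonneg (Matrix.vec K))).1
  simp only [Matrix.sub_mulVec, Matrix.add_mulVec, Matrix.kronecker_mulVec_vec,
    Matrix.transpose_transpose, dotProduct_sub, dotProduct_add, Matrix.star_vec_dotProduct_vec,
    Complex.sub_re, Complex.add_re, Complex.zero_re, ← Matrix.mul_assoc] at hvec
  exact sub_nonneg.mp hvec

end KroneckerGeomMean

section Epstein
variable {n : Type*} [Fintype n] [DecidableEq n] {A A₁ A₂ G X : Matrix n n ℂ}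

lemma mpow_conj_posSemidef (A : Matrix n n ℂ) (s : ℝ) (hX : X.PosSemidef) :
    (mpow A s * X * mpow A s).PosSemidef :=
  (IsSelfAdjoint.conjugate_nonneg hX.nonneg (isHermitian_mpow A s)).posSemidef

lemma mpow_conj_posDef (hA : A.PosDef) (s : ℝ) (hX : X.PosDef) :
    (mpow A s * X * mpow A s).PosDef := by
  have h := hX.conjTranspose_mul_mul_same (B := mpow A s)
    (Matrix.mulVec_injective_of_isUnit (mpow_posDef hA s).isUnit)
  rwa [(isHermitian_mpow A s).eq] at h

lemma trace_mpow_mpow_conj (hA : A.PosSemidef) (hX : X.PosSemidef) {s : ℝ} (hs : 0 ≤ s) (r : ℝ) :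
    (mpow (mpow A s * X * mpow A s) r).trace =
      (mpow (mpow X (1 / 2) * mpow A (2 * s) * mpow X (1 / 2)) r).trace := by
  have h := trace_mpow_mul_conjTranspose_self (mpow A s * mpow X (1 / 2)) r
  have hroot : mpow X (1 / 2) * mpow X (1 / 2) = X := by
    rw [← mpow_add_of_nonneg hX (by norm_num) (by norm_num), add_halves, mpow_one hX]
  rwa [Matrix.conjTranspose_mul, (isHermitian_mpow A s).eq, (isHermitian_mpow X _).eq,
    Matrix.mul_assoc, ← Matrix.mul_assoc (mpow X _), hroot, ← Matrix.mul_assoc,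
    Matrix.mul_assoc (mpow X _), ← Matrix.mul_assoc (mpow A s) (mpow A s),
    ← mpow_add_of_nonneg hA hs hs, ← two_mul, ← Matrix.mul_assoc] at h

/-- Carlen and Lieb's proof: with `D A = K * A ^ p * K`, the left side is Lieb's functional at
`Zᵢ = D Aᵢ ^ (1 / p)`, and Young's inequality `tr D Z ^ (1 - p) ≤ p tr D ^ (1 / p) + (1 - p) tr Z`
bounds the result. -/
lemma trace_epstein_superadditive (hA₁ : A₁.PosDef) (hA₂ : A₂.PosDef) {K : Matrix n n ℂ}
    (hK : K.PosDef) {p : ℝ} (hp : p ∈ Set.Ioc 0 1) :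
    (mpow (K * mpow A₁ p * K) p⁻¹).trace.re + (mpow (K * mpow A₂ p * K) p⁻¹).trace.re ≤
      (mpow (K * mpow (A₁ + A₂) p * K) p⁻¹).trace.re := by
  have hD : ∀ {A : Matrix n n ℂ}, A.PosDef → (K * mpow A p * K).PosDef := fun hA => by
    simpa only [mpow_one hK.posSemidef] using mpow_conj_posDef hK 1 (mpow_posDef hA p)
  have hsplit : ∀ {A : Matrix n n ℂ}, A.PosDef →
      K * mpow A p * K * mpow (mpow (K * mpow A p * K) p⁻¹) (1 - p) =
        mpow (K * mpow A p * K) p⁻¹ := fun hA => by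
    rw [mpow_mpow (hD hA).posSemidef]
    nth_rw 1 [← mpow_one (hD hA).posSemidef]
    rw [← mpow_add (hD hA), mul_one_sub, inv_mul_cancel₀ hp.1.ne', add_sub_cancel]
  set Z₁ := mpow (K * mpow A₁ p * K) p⁻¹
  set Z₂ := mpow (K * mpow A₂ p * K) p⁻¹
  have hZ₁ : Z₁.PosDef := mpow_posDef (hD hA₁) _
  have hZ₂ : Z₂.PosDef := mpow_posDef (hD hA₂) _
  set D := K * mpow (A₁ + A₂) p * K
  have hD₀ : D.PosSemidef := (hD (hA₁.add hA₂)).posSemidef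
  have hlieb := trace_lieb_superadditive hZ₁ hZ₂ hA₁ hA₂ K ⟨hp.1.le, hp.2⟩
  rw [hK.isHermitian.eq, hsplit hA₁, hsplit hA₂] at hlieb
  have hyoung := trace_mpow_mul_mpow_re_le (mpow_posSemidef hD₀ p⁻¹) (hZ₁.add hZ₂).posSemidef
    hp.1.le (sub_nonneg.mpr hp.2) (add_sub_cancel p 1)
  rw [mpow_mpow hD₀, inv_mul_cancel₀ hp.1.ne', mpow_one hD₀, Matrix.trace_add,
    Complex.add_re] at hyoung
  exact le_of_mul_le_mul_left (by linarith) hp.1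

lemma trace_mpow_mpow_conj_re_le (hA : A.PosDef) (hX : X.PosSemidef) (hG : G.PosDef) {α : ℝ}
    (hα : α ∈ Set.Ioo 0 1) (s : ℝ) :
    (mpow (mpow A s * X * mpow A s) α).trace.re ≤ α * (X * G⁻¹).trace.re +
      (1 - α) * (mpow (mpow A s * G * mpow A s) (α / (1 - α))).trace.re := by
  have hC := mpow_conj_posDef hA s hG
  have h := trace_mpow_re_le_trace_mul_add (mpow_conj_posSemidef A s hX) hC.inv hα
  have hdet := (Matrix.isUnit_iff_isUnit_det _).mp (mpow_posDef hA s).isUnit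
  have hcancel : mpow A s * X * mpow A s * (mpow A s * G * mpow A s)⁻¹ =
      mpow A s * (X * G⁻¹) * (mpow A s)⁻¹ := by
    rw [Matrix.mul_inv_rev, Matrix.mul_inv_rev, Matrix.mul_assoc,
      Matrix.mul_nonsing_inv_cancel_left _ _ hdet, ← Matrix.mul_assoc, ← Matrix.mul_assoc]
  rwa [mpow_inv hC, neg_neg, hcancel, Matrix.trace_mul_comm,
    Matrix.nonsing_inv_mul_cancel_left _ _ hdet] at h

/-- The optimal `G` is `A ^ (-s) Z ^ (1 - α) A ^ (-s)` with `Z = A ^ s X A ^ s`. -/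
lemma exists_trace_mpow_mpow_conj_re_eq (hA : A.PosDef) (hX : X.PosDef) {α : ℝ} (hα : α ≠ 1)
    (s : ℝ) :
    ∃ G : Matrix n n ℂ, G.PosDef ∧ (mpow (mpow A s * X * mpow A s) α).trace.re =
      α * (X * G⁻¹).trace.re +
        (1 - α) * (mpow (mpow A s * G * mpow A s) (α / (1 - α))).trace.re := by
  set Z := mpow A s * X * mpow A s
  have hZ : Z.PosDef := mpow_conj_posDef hA s hX
  have hα' : 1 - α ≠ 0 := sub_ne_zero.mpr hα.symm
  refine ⟨mpow A (-s) * mpow Z (1 - α) * mpow A (-s),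
    mpow_conj_posDef hA _ (mpow_posDef hZ _), ?_⟩
  have hcancel := mpow_mul_mpow_neg hA s
  have hcancel' : mpow A (-s) * mpow A s = 1 := mul_eq_one_comm.mp hcancel
  have hconj : mpow A s * (mpow A (-s) * mpow Z (1 - α) * mpow A (-s)) * mpow A s =
      mpow Z (1 - α) := by
    rw [← Matrix.mul_assoc, ← Matrix.mul_assoc, hcancel, Matrix.one_mul, Matrix.mul_assoc, hcancel',
      Matrix.mul_one]
  have hdual : (X * (mpow A (-s) * mpow Z (1 - α) * mpow A (-s))⁻¹).trace = (mpow Z α).trace := by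
    rw [Matrix.mul_inv_rev, Matrix.mul_inv_rev, inv_mpow hA, inv_mpow hZ, neg_neg,
      ← Matrix.mul_assoc, ← Matrix.mul_assoc, Matrix.trace_mul_comm, ← Matrix.mul_assoc,
      ← Matrix.mul_assoc]
    change (Z * _).trace = _
    nth_rw 1 [← mpow_one hZ.posSemidef]
    rw [← mpow_add hZ, neg_sub, add_sub_cancel]
  rw [hconj, hdual, mpow_mpow hZ.posSemidef, mul_div_cancel₀ _ hα']
  ring

end Epstein

section SandwichedTrace
variable {n : Type*} [Fintype n] [DecidableEq n] {A A₁ A₂ X X₁ X₂ : Matrix n n ℂ} {α : ℝ}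

/-- The quantity `tr (A ^ s X A ^ s) ^ α` with `s = (1 - α) / (2 α)`, whose logarithm divided by
`α - 1` is the sandwiched Rényi divergence of `X` relative to `A`. -/
noncomputable def sandwichedTrace (α : ℝ) (X A : Matrix n n ℂ) : ℝ :=
  (mpow (mpow A ((1 - α) / (2 * α)) * X * mpow A ((1 - α) / (2 * α))) α).trace.re

lemma sandwichedTrace_nonneg (A : Matrix n n ℂ) (hX : X.PosSemidef) (α : ℝ) :
    0 ≤ sandwichedTrace α X A :=
  trace_re_nonneg (mpow_posSemidef (mpow_conj_posSemidef A _ hX) α)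

lemma sandwichedTrace_add_le (A : Matrix n n ℂ) (hX₁ : X₁.PosSemidef) (hX₂ : X₂.PosSemidef)
    (hα : α ∈ Set.Icc 0 1) :
    sandwichedTrace α (X₁ + X₂) A ≤ sandwichedTrace α X₁ A + sandwichedTrace α X₂ A := by
  rw [sandwichedTrace, Matrix.mul_add, Matrix.add_mul]
  exact trace_mpow_add_re_le (mpow_conj_posSemidef A _ hX₁) (mpow_conj_posSemidef A _ hX₂) hα

lemma two_mul_sandwich_exponent (α : ℝ) : 2 * ((1 - α) / (2 * α)) = (1 - α) / α := by
  rw [← mul_div_assoc, mul_div_mul_left _ _ two_ne_zero]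

lemma sandwichedTrace_superadditive_of_posDef (hX₁ : X₁.PosDef) (hX₂ : X₂.PosDef) (hA₁ : A₁.PosDef)
    (hA₂ : A₂.PosDef) (hα : α ∈ Set.Ico (1 / 2) 1) :
    sandwichedTrace α X₁ A₁ + sandwichedTrace α X₂ A₂ ≤
      sandwichedTrace α (X₁ + X₂) (A₁ + A₂) := by
  have h0 : 0 < α := by linarith [hα.1]
  have h1 : 0 < 1 - α := sub_pos.mpr hα.2
  set s := (1 - α) / (2 * α)
  have hp : 2 * s = (1 - α) / α := two_mul_sandwich_exponent α
  obtain ⟨G, hG, hGmax⟩ :=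
    exists_trace_mpow_mpow_conj_re_eq (hA₁.add hA₂) (hX₁.add hX₂) hα.2.ne s
  have hdual : ∀ {A : Matrix n n ℂ}, A.PosDef →
      (mpow (mpow A s * G * mpow A s) (α / (1 - α))).trace =
        (mpow (mpow G (1 / 2) * mpow A ((1 - α) / α) * mpow G (1 / 2))
          ((1 - α) / α)⁻¹).trace := fun hA => by
    rw [trace_mpow_mpow_conj hA.posSemidef hG.posSemidef (by positivity : 0 ≤ s), hp, inv_div]
  have hepstein := trace_epstein_superadditive hA₁ hA₂ (mpow_posDef hG (1 / 2))
    (p := (1 - α) / α) ⟨by positivity, (div_le_one h0).mpr (by linarith [hα.1])⟩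
  rw [← hdual hA₁, ← hdual hA₂, ← hdual (hA₁.add hA₂)] at hepstein
  have hle₁ := trace_mpow_mpow_conj_re_le hA₁ hX₁.posSemidef hG ⟨h0, hα.2⟩ s
  have hle₂ := trace_mpow_mpow_conj_re_le hA₂ hX₂.posSemidef hG ⟨h0, hα.2⟩ s
  rw [Matrix.add_mul X₁, Matrix.trace_add, Complex.add_re] at hGmax
  unfold sandwichedTrace
  linarith [mul_le_mul_of_nonneg_left hepstein h1.le]

lemma continuous_sandwichedTrace {T : Type*} [TopologicalSpace T] {x a : T → Matrix n n ℂ}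
    (hx : Continuous x) (ha : Continuous a) (hxH : ∀ t, (x t).IsHermitian)
    (haH : ∀ t, (a t).IsHermitian) (hα : α ∈ Set.Icc 0 1) :
    Continuous fun t => sandwichedTrace α (x t) (a t) := by
  have hs : 0 ≤ (1 - α) / (2 * α) :=
    div_nonneg (sub_nonneg.mpr hα.2) (mul_nonneg zero_le_two hα.1)
  have hpow := continuous_mpow ha haH hs
  have hconj := continuous_mpow ((hpow.matrix_mul hx).matrix_mul hpow)
    (fun t => (hxH t).isSelfAdjoint.conjugate_self (isHermitian_mpow (a t) _)) hα.1
  exact Complex.continuous_re.comp hconj.matrix_trace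

lemma continuous_sandwichedTrace_add_smul_one (hX : X.PosSemidef) (hA : A.PosSemidef)
    (hα : α ∈ Set.Icc 0 1) :
    Continuous fun δ : ℝ => sandwichedTrace α (X + δ • 1) (A + δ • 1) :=
  continuous_sandwichedTrace (by fun_prop) (by fun_prop) (isHermitian_add_smul_one hX)
    (isHermitian_add_smul_one hA) hα

lemma sandwichedTrace_superadditive (hX₁ : X₁.PosSemidef) (hX₂ : X₂.PosSemidef)
    (hA₁ : A₁.PosSemidef) (hA₂ : A₂.PosSemidef) (hα : α ∈ Set.Ico (1 / 2) 1) :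
    sandwichedTrace α X₁ A₁ + sandwichedTrace α X₂ A₂ ≤
      sandwichedTrace α (X₁ + X₂) (A₁ + A₂) := by
  have hα' : α ∈ Set.Icc 0 1 := ⟨by linarith [hα.1], hα.2.le⟩
  have hsum : Continuous fun δ : ℝ =>
      sandwichedTrace α (X₁ + δ • 1 + (X₂ + δ • 1)) (A₁ + δ • 1 + (A₂ + δ • 1)) :=
    continuous_sandwichedTrace (by fun_prop) (by fun_prop)
      (fun δ => (isHermitian_add_smul_one hX₁ δ).add (isHermitian_add_smul_one hX₂ δ))
      (fun δ => (isHermitian_add_smul_one hA₁ δ).add (isHermitian_add_smul_one hA₂ δ)) hα'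
  have h := le_at_zero_of_forall_pos_le
    ((continuous_sandwichedTrace_add_smul_one hX₁ hA₁ hα').add
      (continuous_sandwichedTrace_add_smul_one hX₂ hA₂ hα')) hsum fun δ hδ =>
    sandwichedTrace_superadditive_of_posDef (posDef_add_smul_one hX₁ hδ)
      (posDef_add_smul_one hX₂ hδ) (posDef_add_smul_one hA₁ hδ) (posDef_add_smul_one hA₂ hδ) hα
  simpa only [Pi.add_apply, zero_smul, add_zero] using h

lemma sandwichedTrace_self (hX : X.PosSemidef) (hα : α ∈ Set.Ioc 0 1) :
    sandwichedTrace α X X = X.trace.re := by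
  have hs : 0 ≤ (1 - α) / (2 * α) :=
    div_nonneg (sub_nonneg.mpr hα.2) (mul_nonneg zero_le_two hα.1.le)
  have hexp : ((1 - α) / (2 * α) + 1 + (1 - α) / (2 * α)) * α = 1 := by
    have := hα.1.ne'
    field_simp
    ring
  rw [sandwichedTrace]
  nth_rw 2 [← mpow_one hX]
  rw [← mpow_add_of_nonneg hX hs zero_le_one, ← mpow_add_of_nonneg hX (by positivity) hs,
    mpow_mpow hX, hexp, mpow_one hX]

lemma trace_re_le_sandwichedTrace (hX : X.PosSemidef) (h : X ≤ A) (hα : α ∈ Set.Ico (1 / 2) 1) :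
    X.trace.re ≤ sandwichedTrace α X A := by
  have hsuper := sandwichedTrace_superadditive hX .zero hX (Matrix.le_iff.mp h) hα
  rw [sandwichedTrace_self hX ⟨by linarith [hα.1], hα.2.le⟩, add_zero, add_sub_cancel] at hsuper
  linarith [sandwichedTrace_nonneg (A - X) .zero α]

lemma sandwichedTrace_smul_right (hX : X.PosSemidef) (hA : A.PosSemidef) {c : ℝ} (hc : 0 ≤ c)
    (hα : α ∈ Set.Ioo 0 1) :
    sandwichedTrace α X (c • A) = c ^ (1 - α) * sandwichedTrace α X A := by
  have hα₀ := hα.1.ne'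
  have hs : 0 < (1 - α) / (2 * α) :=
    div_pos (sub_pos.mpr hα.2) (mul_pos two_pos hα.1)
  have hexp : ((1 - α) / (2 * α) + (1 - α) / (2 * α)) * α = 1 - α := by
    field_simp
    ring
  rw [sandwichedTrace, mpow_smul hA hc, Matrix.smul_mul, Matrix.smul_mul, Matrix.mul_smul,
    smul_smul, ← Real.rpow_add_of_nonneg hc hs.le hs.le,
    mpow_smul (mpow_conj_posSemidef A _ hX) (Real.rpow_nonneg hc _), ← Real.rpow_mul hc, hexp,
    Matrix.trace_smul, Complex.smul_re, smul_eq_mul, sandwichedTrace]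

lemma sandwichedTrace_le_mul_add_of_posDef (hX : X.PosSemidef) (hA : A.PosDef)
    (hα : α ∈ Set.Ioo 0 1) :
    sandwichedTrace α X A ≤ α * X.trace.re + (1 - α) * A.trace.re := by
  have h := trace_mpow_mpow_conj_re_le hA hX .one hα ((1 - α) / (2 * α))
  have hα₀ := hα.1.ne'
  have hα₁ := (sub_pos.mpr hα.2).ne'
  rwa [inv_one, Matrix.mul_one, Matrix.mul_one, ← mpow_add hA, ← two_mul,
    two_mul_sandwich_exponent, mpow_mpow hA.posSemidef, div_mul_div_cancel₀ hα₀, div_self hα₁,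
    mpow_one hA.posSemidef] at h

lemma sandwichedTrace_le_mul_add (hX : X.PosSemidef) (hA : A.PosSemidef)
    (hα : α ∈ Set.Ioo 0 1) :
    sandwichedTrace α X A ≤ α * X.trace.re + (1 - α) * A.trace.re := by
  have hbound : Continuous fun δ : ℝ => α * (X + δ • (1 : Matrix n n ℂ)).trace.re +
      (1 - α) * (A + δ • (1 : Matrix n n ℂ)).trace.re := by
    fun_prop
  simpa only [zero_smul, add_zero] using le_at_zero_of_forall_pos_le
    (continuous_sandwichedTrace_add_smul_one hX hA ⟨hα.1.le, hα.2.le⟩) hbound fun δ hδ =>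
    sandwichedTrace_le_mul_add_of_posDef (posDef_add_smul_one hX hδ).posSemidef
      (posDef_add_smul_one hA hδ) hα

lemma sandwichedTrace_le_trace_rpow_mul (hX : X.PosSemidef) (hA : A.PosSemidef)
    (hα : α ∈ Set.Ioo 0 1) :
    sandwichedTrace α X A ≤ X.trace.re ^ α * A.trace.re ^ (1 - α) := by
  rcases (trace_re_nonneg hX).eq_or_lt with hx | hx
  · obtain rfl := eq_zero_of_trace_re_eq_zero hX hx.symm
    simp [sandwichedTrace, zero_mpow hα.1.ne', Real.zero_rpow hα.1.ne']
  rcases (trace_re_nonneg hA).eq_or_lt with ha | ha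
  · obtain rfl := eq_zero_of_trace_re_eq_zero hA ha.symm
    have hs : (1 - α) / (2 * α) ≠ 0 :=
      (div_pos (sub_pos.mpr hα.2) (mul_pos two_pos hα.1)).ne'
    simp [sandwichedTrace, zero_mpow hs, zero_mpow hα.1.ne',
      Real.zero_rpow (sub_pos.mpr hα.2).ne']
  set x := X.trace.re
  set a := A.trace.re
  have h := sandwichedTrace_le_mul_add hX (hA.smul (div_pos hx ha).le) hα
  rw [sandwichedTrace_smul_right hX hA (div_pos hx ha).le hα, Matrix.trace_smul, Complex.smul_re,
    smul_eq_mul, div_mul_cancel₀ _ ha.ne', ← add_mul, add_sub_cancel, one_mul,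
    Real.div_rpow hx.le ha.le, div_mul_eq_mul_div, div_le_iff₀ (Real.rpow_pos_of_pos ha _)] at h
  refine le_of_mul_le_mul_left (h.trans_eq ?_) (Real.rpow_pos_of_pos hx (1 - α))
  rw [← mul_assoc, ← Real.rpow_add hx, sub_add_cancel, Real.rpow_one]

end SandwichedTrace

section BlockDiagonal
variable {n γ : Type*} {g : n → γ} {M N : Matrix n n ℂ}

/-- `M` has no entries between different fibres of `g`. With `g` one of the two projections of
`a × b`, this says that `M` is classical on the corresponding tensor factor. -/
def IsBlockDiagonal (g : n → γ) (M : Matrix n n ℂ) : Prop :=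
  ∀ p q, g p ≠ g q → M p q = 0

namespace IsBlockDiagonal

lemma add (hM : IsBlockDiagonal g M) (hN : IsBlockDiagonal g N) : IsBlockDiagonal g (M + N) :=
  fun p q h => by rw [Matrix.add_apply, hM p q h, hN p q h, add_zero]

lemma sub (hM : IsBlockDiagonal g M) (hN : IsBlockDiagonal g N) : IsBlockDiagonal g (M - N) :=
  fun p q h => by rw [Matrix.sub_apply, hM p q h, hN p q h, sub_zero]

lemma smul (hM : IsBlockDiagonal g M) (c : ℝ) : IsBlockDiagonal g (c • M) :=
  fun p q h => by rw [Matrix.smul_apply, hM p q h, smul_zero]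

end IsBlockDiagonal

variable [Fintype n]

lemma isBlockDiagonal_iff_commute [DecidableEq n] [DecidableEq γ] : IsBlockDiagonal g M ↔
    ∀ x, Commute M (Matrix.diagonal fun p => if g p = x then (1 : ℂ) else 0) := by
  refine ⟨fun h x => ?_, fun h p q hpq => ?_⟩
  · ext p q
    rw [Matrix.diagonal_mul, Matrix.mul_diagonal]
    by_cases hpq : g p = g q
    · rw [hpq, mul_comm]
    · rw [h p q hpq, zero_mul, mul_zero]
  · have hentry := congrFun (congrFun (h (g p)).eq p) q
    rw [Matrix.diagonal_mul, Matrix.mul_diagonal, if_neg (Ne.symm hpq), mul_zero, if_pos rfl,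
      one_mul] at hentry
    exact hentry.symm

open scoped Classical in
lemma IsBlockDiagonal.cfcₙ (hMg : IsBlockDiagonal g M) (hM : M.IsHermitian) (f : ℝ → ℝ) :
    IsBlockDiagonal g (cfcₙ f M) := by
  rw [isBlockDiagonal_iff_commute] at hMg ⊢
  exact fun x => hM.isSelfAdjoint.commute_cfcₙ (hMg x) f

variable [DecidableEq n]

lemma traceNorm_eq_trace_abs (M : Matrix n n ℂ) : traceNorm M = (CFC.abs M).trace.re := by
  rw [traceNorm, mpow_eq_rpow (Matrix.posSemidef_conjTranspose_mul_self M),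
    ← CFC.sqrt_eq_rpow]
  rfl

lemma traceNorm_eq_trace_posPart_add_trace_negPart (hM : M.IsHermitian) :
    traceNorm M = (M⁺).trace.re + (M⁻).trace.re := by
  rw [traceNorm_eq_trace_abs, ← CFC.posPart_add_negPart M hM.isSelfAdjoint, Matrix.trace_add,
    Complex.add_re]

/-- Up to a common multiple of `ρ` that fills their traces up to `ε`, `N` and `N'` are the negative
and the positive part of `ρ - σ`. -/
lemma exists_add_eq_add_of_traceNorm_sub_le {ρ σ : Matrix n n ℂ} (hρ : IsDensity ρ)
    (hσ : IsDensity σ) (hρg : IsBlockDiagonal g ρ) (hσg : IsBlockDiagonal g σ) {ε : ℝ}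
    (hε : 1 / 2 * traceNorm (ρ - σ) ≤ ε) :
    ∃ N N' : Matrix n n ℂ, N.PosSemidef ∧ N'.PosSemidef ∧ IsBlockDiagonal g N ∧
      IsBlockDiagonal g N' ∧ N.trace.re = ε ∧ N'.trace.re = ε ∧ ρ + N = σ + N' := by
  have hM : (ρ - σ).IsHermitian := hρ.1.isHermitian.sub hσ.1.isHermitian
  have hMg := hρg.sub hσg
  have hsub : (ρ - σ)⁺ - (ρ - σ)⁻ = ρ - σ := CFC.posPart_sub_negPart _ hM.isSelfAdjoint
  have htr := congrArg (fun X => (Matrix.trace X).re) hsub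
  simp only [Matrix.trace_sub, Complex.sub_re, hρ.2, hσ.2, sub_self, Complex.zero_re] at htr
  rw [traceNorm_eq_trace_posPart_add_trace_negPart hM] at hε
  have hc : 0 ≤ ε - ((ρ - σ)⁺).trace.re := by linarith
  have hcρ : ((ε - ((ρ - σ)⁺).trace.re) • ρ).trace.re = ε - ((ρ - σ)⁺).trace.re := by
    rw [Matrix.trace_smul, Complex.smul_re, hρ.2, Complex.one_re, smul_eq_mul, mul_one]
  refine ⟨(ρ - σ)⁻ + (ε - ((ρ - σ)⁺).trace.re) • ρ, (ρ - σ)⁺ + (ε - ((ρ - σ)⁺).trace.re) • ρ,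
    (CFC.negPart_nonneg _).posSemidef.add (hρ.1.smul hc),
    (CFC.posPart_nonneg _).posSemidef.add (hρ.1.smul hc), (hMg.cfcₙ hM _).add (hρg.smul _),
    (hMg.cfcₙ hM _).add (hρg.smul _), ?_, ?_, ?_⟩
  · rw [Matrix.trace_add, Complex.add_re, hcρ]; linarith
  · rw [Matrix.trace_add, Complex.add_re, hcρ]; linarith
  · rw [← add_assoc, ← add_assoc, eq_add_of_sub_eq' hsub]
    abel

end BlockDiagonal

section PartialTrace
variable {a b : Type*} [Fintype a]

/-- The partial trace over the first tensor factor, i.e. the marginal `ρ_B` of `ρ_AB`. -/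
def partialTraceLeft (N : Matrix (a × b) (a × b) ℂ) : Matrix b b ℂ :=
  fun i j => ∑ x, N (x, i) (x, j)

variable {N : Matrix (a × b) (a × b) ℂ}

lemma partialTraceLeft_eq_sum_submatrix (N : Matrix (a × b) (a × b) ℂ) :
    partialTraceLeft N = ∑ x, N.submatrix (Prod.mk x) (Prod.mk x) := by
  ext i j
  simp only [partialTraceLeft, Matrix.sum_apply, Matrix.submatrix_apply]

lemma partialTraceLeft_posSemidef (hN : N.PosSemidef) : (partialTraceLeft N).PosSemidef := by
  rw [partialTraceLeft_eq_sum_submatrix]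
  exact Matrix.posSemidef_sum _ fun x _ => hN.submatrix _

variable [Fintype b]

lemma trace_partialTraceLeft (N : Matrix (a × b) (a × b) ℂ) :
    (partialTraceLeft N).trace = N.trace := by
  simp only [Matrix.trace, partialTraceLeft, Matrix.diag_apply, Fintype.sum_prod_type]
  exact Finset.sum_comm

lemma isDensity_partialTraceLeft [DecidableEq a] [DecidableEq b] (hN : IsDensity N) :
    IsDensity (partialTraceLeft N) :=
  ⟨partialTraceLeft_posSemidef hN.1, (trace_partialTraceLeft N).trans hN.2⟩

end PartialTrace

section ReductionCriterion
variable {n a b : Type*} [Fintype a] [DecidableEq a] [Finite b] {N : Matrix (a × b) (a × b) ℂ}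

lemma le_trace_smul_one [Fintype n] [DecidableEq n] {M : Matrix n n ℂ} (hM : M.PosSemidef) :
    M ≤ M.trace • (1 : Matrix n n ℂ) := by
  have hle : M ≤ algebraMap ℝ (Matrix n n ℂ) (∑ i, hM.isHermitian.eigenvalues i) := by
    refine le_algebraMap_of_spectrum_le (fun x hx => ?_) hM.isHermitian.isSelfAdjoint
    rw [hM.isHermitian.spectrum_real_eq_range_eigenvalues] at hx
    obtain ⟨i, rfl⟩ := hx
    exact Finset.single_le_sum (fun j _ => hM.eigenvalues_nonneg j) (Finset.mem_univ i)
  have htrace : M.trace = ((∑ i, hM.isHermitian.eigenvalues i : ℝ) : ℂ) :=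
    hM.isHermitian.trace_eq_sum_eigenvalues.trans (Complex.ofReal_sum _ _).symm
  rwa [IsScalarTower.algebraMap_apply ℝ ℂ, Complex.coe_algebraMap, ← htrace,
    Algebra.algebraMap_eq_smul_one] at hle

lemma le_one_kronecker_partialTraceLeft_of_fst (hN : N.PosSemidef)
    (hg : IsBlockDiagonal Prod.fst N) : N ≤ (1 : Matrix a a ℂ) ⊗ₖ partialTraceLeft N := by
  have hsplit : (1 : Matrix a a ℂ) ⊗ₖ partialTraceLeft N - N =
      ∑ x, Matrix.diagonal (fun y => if y = x then (0 : ℂ) else 1) ⊗ₖ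
        N.submatrix (Prod.mk x) (Prod.mk x) := by
    ext ⟨x, i⟩ ⟨y, j⟩
    simp only [Matrix.sub_apply, Matrix.kroneckerMap_apply, Matrix.sum_apply, partialTraceLeft,
      Matrix.submatrix_apply]
    rcases eq_or_ne x y with rfl | hxy
    · simp only [Matrix.one_apply_eq, one_mul, Matrix.diagonal_apply_eq]
      rw [sub_eq_iff_eq_add, ← Fintype.sum_ite_eq x fun z => N (z, i) (z, j),
        ← Finset.sum_add_distrib]
      refine Finset.sum_congr rfl fun z _ => ?_
      split_ifs <;> simp
    · simp [hxy, hg (x, i) (y, j) hxy]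
  rw [Matrix.le_iff, hsplit]
  refine Matrix.posSemidef_sum _ fun x _ => Matrix.PosSemidef.kronecker ?_ (hN.submatrix _)
  exact Matrix.posSemidef_diagonal_iff.mpr fun y => by split_ifs <;> simp

lemma le_one_kronecker_partialTraceLeft_of_snd (hN : N.PosSemidef)
    (hg : IsBlockDiagonal Prod.snd N) : N ≤ (1 : Matrix a a ℂ) ⊗ₖ partialTraceLeft N := by
  classical
  cases nonempty_fintype b
  have hsplit : (1 : Matrix a a ℂ) ⊗ₖ partialTraceLeft N - N = ∑ y,
      ((N.submatrix (·, y) (·, y)).trace • (1 : Matrix a a ℂ) - N.submatrix (·, y) (·, y)) ⊗ₖ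
        Matrix.diagonal (fun z => if z = y then (1 : ℂ) else 0) := by
    ext ⟨x, i⟩ ⟨y, j⟩
    simp only [Matrix.sub_apply, Matrix.kroneckerMap_apply, Matrix.sum_apply, partialTraceLeft,
      Matrix.submatrix_apply, Matrix.smul_apply, Matrix.trace, Matrix.diag_apply, smul_eq_mul]
    rcases eq_or_ne i j with rfl | hij
    · simp [mul_comm]
    · simp [hij, hg (x, i) (y, j) hij, fun z => hg (z, i) (z, j) hij]
  rw [Matrix.le_iff, hsplit]
  refine Matrix.posSemidef_sum _ fun y _ => Matrix.PosSemidef.kronecker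
    (Matrix.le_iff.mp (le_trace_smul_one (hN.submatrix _))) ?_
  exact Matrix.posSemidef_diagonal_iff.mpr fun z => by split_ifs <;> simp

end ReductionCriterion

section ConditionalEntropy
variable {a b : Type*} [Fintype a] [DecidableEq a] [Fintype b] [DecidableEq b]
  {ρ σ N N' : Matrix (a × b) (a × b) ℂ} {η : Matrix b b ℂ} {α ε : ℝ}

lemma sandTr_eq_sandwichedTrace (hη : η.PosSemidef) (α : ℝ) (ρ : Matrix (a × b) (a × b) ℂ) :
    sandTr α ρ η = sandwichedTrace α ρ ((1 : Matrix a a ℂ) ⊗ₖ η) := by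
  rw [sandTr, sandwichedTrace, one_kronecker_mpow hη]

lemma sandTr_nonneg (hρ : ρ.PosSemidef) (hη : η.PosSemidef) (α : ℝ) : 0 ≤ sandTr α ρ η := by
  rw [sandTr_eq_sandwichedTrace hη]
  exact sandwichedTrace_nonneg _ hρ α

lemma sandwichedTrace_one_kronecker_le (hρ : ρ.PosSemidef) (hη : η.PosSemidef)
    (hα : α ∈ Set.Ioo 0 1) :
    sandwichedTrace α ρ ((1 : Matrix a a ℂ) ⊗ₖ η) ≤
      ρ.trace.re ^ α * (Fintype.card a * η.trace.re) ^ (1 - α) := by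
  have h := sandwichedTrace_le_trace_rpow_mul hρ (Matrix.PosSemidef.one.kronecker hη) hα
  rwa [Matrix.trace_kronecker, Matrix.trace_one, ← nsmul_eq_mul, Complex.re_nsmul,
    nsmul_eq_mul] at h

lemma one_le_card_of_isDensity (hρ : IsDensity ρ) : (1 : ℝ) ≤ Fintype.card a := by
  have : Nonempty a := by
    by_contra ha
    rw [not_nonempty_iff] at ha
    simpa [Matrix.trace] using hρ.2
  exact_mod_cast Fintype.card_pos

lemma one_div_mul_logb_sandTr_le (hρ : IsDensity ρ) (hη : IsDensity η) (hα : α ∈ Set.Ioo 0 1) :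
    1 / (1 - α) * Real.logb 2 (sandTr α ρ η) ≤ Real.logb 2 (Fintype.card a) := by
  have hd := one_le_card_of_isDensity hρ
  have hle : sandTr α ρ η ≤ (Fintype.card a : ℝ) ^ (1 - α) := by
    rw [sandTr_eq_sandwichedTrace hη.1]
    simpa [hρ.2, hη.2] using sandwichedTrace_one_kronecker_le hρ.1 hη.1 hα
  rw [one_div_mul_eq_div, div_le_iff₀' (sub_pos.mpr hα.2)]
  rcases (sandTr_nonneg hρ.1 hη.1 α).eq_or_lt with h | h
  · rw [← h, Real.logb_zero]
    exact mul_nonneg (sub_pos.mpr hα.2).le (Real.logb_nonneg one_lt_two hd)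
  · rw [← Real.logb_rpow_eq_mul_logb_of_pos (zero_lt_one.trans_le hd)]
    exact Real.logb_le_logb_of_le one_lt_two h hle

lemma one_div_mul_logb_sandTr_le_Hcond (hρ : IsDensity ρ) (hη : IsDensity η)
    (hα : α ∈ Set.Ioo 0 1) : 1 / (1 - α) * Real.logb 2 (sandTr α ρ η) ≤ Hcond α ρ :=
  le_ciSup (f := fun η : {η : Matrix b b ℂ // IsDensity η} =>
      1 / (1 - α) * Real.logb 2 (sandTr α ρ η))
    ⟨_, Set.forall_mem_range.mpr fun η => one_div_mul_logb_sandTr_le hρ η.2 hα⟩ ⟨η, hη⟩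

lemma Hcond_le_logb_card (hρ : IsDensity ρ) (hα : α ∈ Set.Ioo 0 1) :
    Hcond α ρ ≤ Real.logb 2 (Fintype.card a) :=
  have : Nonempty {η : Matrix b b ℂ // IsDensity η} := ⟨_, isDensity_partialTraceLeft hρ⟩
  ciSup_le fun η => one_div_mul_logb_sandTr_le hρ η.2 hα

lemma sandTr_le_two_rpow_Hcond (hρ : IsDensity ρ) (hη : IsDensity η) (hα : α ∈ Set.Ioo 0 1) :
    sandTr α ρ η ≤ 2 ^ ((1 - α) * Hcond α ρ) := by
  rcases (sandTr_nonneg hρ.1 hη.1 α).eq_or_lt with h | h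
  · rw [← h]
    positivity
  · rw [← Real.logb_le_iff_le_rpow one_lt_two h, ← div_le_iff₀' (sub_pos.mpr hα.2),
      ← one_div_mul_eq_div]
    exact one_div_mul_logb_sandTr_le_Hcond hρ hη hα

lemma sandwichedTrace_one_kronecker_le_Hcond (hρ : IsDensity ρ) (hη : η.PosSemidef)
    (hη₀ : 0 < η.trace.re) (hα : α ∈ Set.Ioo 0 1) :
    sandwichedTrace α ρ ((1 : Matrix a a ℂ) ⊗ₖ η) ≤
      2 ^ ((1 - α) * Hcond α ρ) * η.trace.re ^ (1 - α) := by
  set t := η.trace.re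
  have ht : η.trace = t := Complex.ext rfl (Complex.le_def.mp hη.trace_nonneg).2.symm
  have hdens : IsDensity (t⁻¹ • η) := by
    refine ⟨hη.smul (inv_nonneg.mpr hη₀.le), ?_⟩
    rw [Matrix.trace_smul, ht, Complex.real_smul, ← Complex.ofReal_mul, inv_mul_cancel₀ hη₀.ne',
      Complex.ofReal_one]
  have hscale : (1 : Matrix a a ℂ) ⊗ₖ η = t • ((1 : Matrix a a ℂ) ⊗ₖ (t⁻¹ • η)) := by
    rw [← Matrix.kronecker_smul, smul_inv_smul₀ hη₀.ne']
  rw [hscale, sandwichedTrace_smul_right hρ.1 (Matrix.PosSemidef.one.kronecker hdens.1) hη₀.le hα,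
    ← sandTr_eq_sandwichedTrace hdens.1, mul_comm]
  exact mul_le_mul_of_nonneg_right (sandTr_le_two_rpow_Hcond hρ hdens hα)
    (Real.rpow_nonneg hη₀.le _)

lemma one_le_sandTr_partialTraceLeft (hρ : IsDensity ρ)
    (hle : ρ ≤ (1 : Matrix a a ℂ) ⊗ₖ partialTraceLeft ρ) (hα : α ∈ Set.Ico (1 / 2) 1) :
    1 ≤ sandTr α ρ (partialTraceLeft ρ) := by
  have h := trace_re_le_sandwichedTrace hρ.1 hle hα
  rwa [hρ.2, Complex.one_re, ← sandTr_eq_sandwichedTrace (partialTraceLeft_posSemidef hρ.1)] at h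

lemma Hcond_nonneg (hρ : IsDensity ρ) (hle : ρ ≤ (1 : Matrix a a ℂ) ⊗ₖ partialTraceLeft ρ)
    (hα : α ∈ Set.Ico (1 / 2) 1) : 0 ≤ Hcond α ρ :=
  (mul_nonneg (one_div_nonneg.mpr (sub_pos.mpr hα.2).le)
    (Real.logb_nonneg one_lt_two (one_le_sandTr_partialTraceLeft hρ hle hα))).trans
    (one_div_mul_logb_sandTr_le_Hcond hρ (isDensity_partialTraceLeft hρ)
      ⟨by linarith [hα.1], hα.2⟩)

lemma Hcond_le_of_forall_sandTr_le (hρ : IsDensity ρ)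
    (hle : ρ ≤ (1 : Matrix a a ℂ) ⊗ₖ partialTraceLeft ρ) (hα : α ∈ Set.Ico (1 / 2) 1) {c : ℝ}
    (h : ∀ η : Matrix b b ℂ, IsDensity η → sandTr α ρ η ≤ 2 ^ ((1 - α) * c)) :
    Hcond α ρ ≤ c := by
  have hρB := isDensity_partialTraceLeft hρ
  have : Nonempty {η : Matrix b b ℂ // IsDensity η} := ⟨_, hρB⟩
  refine ciSup_le fun η => ?_
  rw [one_div_mul_eq_div, div_le_iff₀' (sub_pos.mpr hα.2)]
  rcases (sandTr_nonneg hρ.1 η.2.1 α).eq_or_lt with h₀ | h₀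
  · -- `logb 2 0 = 0`, so this term is bounded only because `c ≥ 0`.
    rw [← h₀, Real.logb_zero, ← Real.rpow_le_rpow_left_iff one_lt_two, Real.rpow_zero]
    exact (one_le_sandTr_partialTraceLeft hρ hle hα).trans (h _ hρB)
  · exact (Real.logb_le_iff_le_rpow one_lt_two h₀).mpr (h _ η.2)

lemma sandTr_add_le_of_add_eq_add (hρ : IsDensity ρ) (hσ : IsDensity σ) (hη : IsDensity η)
    (hN : N.PosSemidef) (hN' : N'.PosSemidef) (hNε : N.trace.re = ε) (hN'ε : N'.trace.re = ε)
    (hadd : ρ + N = σ + N') (hle : N' ≤ (1 : Matrix a a ℂ) ⊗ₖ partialTraceLeft N')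
    (hα : α ∈ Set.Ico (1 / 2) 1) :
    sandTr α σ η + ε ≤ 2 ^ ((1 - α) * Hcond α ρ) * (1 + ε) ^ (1 - α) +
      ε ^ α * (Fintype.card a * (1 + ε)) ^ (1 - α) := by
  have hα' : α ∈ Set.Ioo 0 1 := ⟨by linarith [hα.1], hα.2⟩
  have hε : 0 ≤ ε := hNε ▸ trace_re_nonneg hN
  have hN'B := partialTraceLeft_posSemidef hN'
  set ω := η + partialTraceLeft N'
  have hω : ω.PosSemidef := hη.1.add hN'B
  have hωtr : ω.trace.re = 1 + ε := by
    rw [Matrix.trace_add, hη.2, trace_partialTraceLeft, Complex.add_re, hN'ε, Complex.one_re]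
  set I : Matrix a a ℂ := 1
  have hI : ∀ {T : Matrix b b ℂ}, T.PosSemidef → (I ⊗ₖ T).PosSemidef :=
    Matrix.PosSemidef.one.kronecker
  have hN'le : ε ≤ sandwichedTrace α N' (I ⊗ₖ partialTraceLeft N') :=
    hN'ε ▸ trace_re_le_sandwichedTrace hN' hle hα
  have hρle := sandwichedTrace_one_kronecker_le_Hcond hρ hω (by linarith) hα'
  have hNle := sandwichedTrace_one_kronecker_le hN hω hα'
  rw [hωtr] at hρle hNle
  rw [hNε] at hNle
  calc sandTr α σ η + ε
      ≤ sandwichedTrace α σ (I ⊗ₖ η) + sandwichedTrace α N' (I ⊗ₖ partialTraceLeft N') := by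
        rw [sandTr_eq_sandwichedTrace hη.1]
        exact add_le_add_right hN'le _
    _ ≤ sandwichedTrace α (σ + N') (I ⊗ₖ η + I ⊗ₖ partialTraceLeft N') :=
        sandwichedTrace_superadditive hσ.1 hN' (hI hη.1) (hI hN'B) hα
    _ = sandwichedTrace α (ρ + N) (I ⊗ₖ ω) := by rw [hadd, Matrix.kronecker_add]
    _ ≤ sandwichedTrace α ρ (I ⊗ₖ ω) + sandwichedTrace α N (I ⊗ₖ ω) :=
        sandwichedTrace_add_le _ hρ.1 hN ⟨hα'.1.le, hα'.2.le⟩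
    _ ≤ _ := add_le_add hρle hNle

lemma le_mul_rpow_of_add_le_mul_rpow {q c d S β : ℝ} (hc : 0 ≤ c) (hd : 0 < d) (hS₁ : 1 ≤ S)
    (hSd : S ≤ d ^ β) (hε : 0 ≤ ε) (h : q + ε ≤ S * (1 + ε) ^ β + c * (d * (1 + ε)) ^ β) :
    q ≤ S * (1 + ε) ^ β * (1 + c * d ^ β - ε / (d * (1 + ε)) ^ β) := by
  rw [Real.mul_rpow hd.le (by linarith)] at h ⊢
  set u := (1 + ε) ^ β
  set v := d ^ β
  have hu : 0 < u := by positivity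
  have hv : 0 < v := by positivity
  have hsplit : S * u * (1 + c * v - ε / (v * u)) = S * u + S * (c * (v * u)) - ε * (S / v) := by
    field_simp
  have hεS : ε * (S / v) ≤ ε := mul_le_of_le_one_right hε ((div_le_one hv).mpr hSd)
  have hcS : c * (v * u) ≤ S * (c * (v * u)) := le_mul_of_one_le_left (by positivity) hS₁
  linarith

lemma Hcond_le_add_of_add_eq_add (hρ : IsDensity ρ) (hσ : IsDensity σ) (hN : N.PosSemidef)
    (hN' : N'.PosSemidef) (hNε : N.trace.re = ε) (hN'ε : N'.trace.re = ε) (hadd : ρ + N = σ + N')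
    (hρle : ρ ≤ (1 : Matrix a a ℂ) ⊗ₖ partialTraceLeft ρ)
    (hσle : σ ≤ (1 : Matrix a a ℂ) ⊗ₖ partialTraceLeft σ)
    (hN'le : N' ≤ (1 : Matrix a a ℂ) ⊗ₖ partialTraceLeft N') (hα : α ∈ Set.Ico (1 / 2) 1) :
    Hcond α σ ≤ Hcond α ρ + (Real.logb 2 (1 + ε) + 1 / (1 - α) * Real.logb 2
      (1 + ε ^ α * (Fintype.card a : ℝ) ^ (1 - α) - ε / (Fintype.card a * (1 + ε)) ^ (1 - α))) := by
  have hα' : α ∈ Set.Ioo 0 1 := ⟨by linarith [hα.1], hα.2⟩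
  have hα₁ : 0 < 1 - α := sub_pos.mpr hα.2
  have hε : 0 ≤ ε := hNε ▸ trace_re_nonneg hN
  have hd : (0 : ℝ) < Fintype.card a := zero_lt_one.trans_le (one_le_card_of_isDensity hρ)
  set d : ℝ := (Fintype.card a : ℝ)
  set S : ℝ := 2 ^ ((1 - α) * Hcond α ρ)
  set B := 1 + ε ^ α * d ^ (1 - α) - ε / (d * (1 + ε)) ^ (1 - α)
  have hS₁ : 1 ≤ S := Real.one_le_rpow one_le_two (mul_nonneg hα₁.le (Hcond_nonneg hρ hρle hα))
  have hSd : S ≤ d ^ (1 - α) := by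
    rw [← Real.le_logb_iff_rpow_le one_lt_two (by positivity),
      Real.logb_rpow_eq_mul_logb_of_pos hd]
    exact mul_le_mul_of_nonneg_left (Hcond_le_logb_card hρ hα') hα₁.le
  have hbound : ∀ η : Matrix b b ℂ, IsDensity η → sandTr α σ η ≤ S * (1 + ε) ^ (1 - α) * B :=
    fun η hη => le_mul_rpow_of_add_le_mul_rpow (Real.rpow_nonneg hε α) hd hS₁ hSd hε
      (sandTr_add_le_of_add_eq_add hρ hσ hη hN hN' hNε hN'ε hadd hN'le hα)
  have hσB := one_le_sandTr_partialTraceLeft hσ hσle hα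
  have hB₀ : 0 < B := pos_of_mul_pos_right
    (zero_lt_one.trans_le (hσB.trans (hbound _ (isDensity_partialTraceLeft hσ)))) (by positivity)
  refine Hcond_le_of_forall_sandTr_le hσ hσle hα fun η hη => (hbound η hη).trans_eq ?_
  rw [mul_add, mul_add, ← mul_assoc _ (1 / _), mul_one_div_cancel hα₁.ne', one_mul,
    Real.rpow_add two_pos, Real.rpow_add two_pos, Real.rpow_logb two_pos (by norm_num) hB₀,
    ← Real.logb_rpow_eq_mul_logb_of_pos (by linarith),
    Real.rpow_logb two_pos (by norm_num) (by positivity), mul_assoc]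

lemma abs_Hcond_sub_le_of_isBlockDiagonal {γ : Type*} {g : a × b → γ}
    (hred : ∀ M : Matrix (a × b) (a × b) ℂ, M.PosSemidef → IsBlockDiagonal g M →
      M ≤ (1 : Matrix a a ℂ) ⊗ₖ partialTraceLeft M)
    (hα : α ∈ Set.Ico (1 / 2) 1) (hρ : IsDensity ρ) (hσ : IsDensity σ)
    (hρg : IsBlockDiagonal g ρ) (hσg : IsBlockDiagonal g σ)
    (hdist : 1 / 2 * traceNorm (ρ - σ) ≤ ε) :
    |Hcond α σ - Hcond α ρ| ≤ Real.logb 2 (1 + ε) + 1 / (1 - α) * Real.logb 2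
      (1 + ε ^ α * (Fintype.card a : ℝ) ^ (1 - α) - ε / (Fintype.card a * (1 + ε)) ^ (1 - α)) := by
  obtain ⟨N, N', hN, hN', hNg, hN'g, hNε, hN'ε, hadd⟩ :=
    exists_add_eq_add_of_traceNorm_sub_le hρ hσ hρg hσg hdist
  have hρle := hred ρ hρ.1 hρg
  have hσle := hred σ hσ.1 hσg
  exact abs_sub_le_iff.mpr
    ⟨sub_le_iff_le_add'.mpr (Hcond_le_add_of_add_eq_add hρ hσ hN hN' hNε hN'ε hadd hρle hσle
      (hred N' hN' hN'g) hα),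
    sub_le_iff_le_add'.mpr (Hcond_le_add_of_add_eq_add hσ hρ hN' hN hN'ε hNε hadd.symm hσle hρle
      (hred N hN hNg) hα)⟩

end ConditionalEntropy

theorem Hcond_uniform_continuity_classical_general {a b : Type*} [Fintype a] [DecidableEq a]
    [Fintype b] [DecidableEq b] {α : ℝ} (hα : α ∈ Set.Ico (1 / 2) 1) {ε : ℝ}
    {ρ σ : Matrix (a × b) (a × b) ℂ} (hρ : IsDensity ρ) (hσ : IsDensity σ)
    (hcl : (ClassicalA ρ ∧ ClassicalA σ) ∨ (ClassicalB ρ ∧ ClassicalB σ))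
    (hdist : 1 / 2 * traceNorm (ρ - σ) ≤ ε) :
    |Hcond α σ - Hcond α ρ| ≤ Real.logb 2 (1 + ε) + 1 / (1 - α) * Real.logb 2
      (1 + ε ^ α * (Fintype.card a : ℝ) ^ (1 - α) - ε / (Fintype.card a * (1 + ε)) ^ (1 - α)) := by
  rcases hcl with ⟨hρA, hσA⟩ | ⟨hρB, hσB⟩
  · exact abs_Hcond_sub_le_of_isBlockDiagonal
      (fun _ => le_one_kronecker_partialTraceLeft_of_fst) hα hρ hσ hρA hσA hdist
  · exact abs_Hcond_sub_le_of_isBlockDiagonal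
      (fun _ => le_one_kronecker_partialTraceLeft_of_snd) hα hρ hσ hρB hσB hdist

/-- Strengthened continuity bound when `A` is classical for both states, or `B` is
classical for both states. -/
theorem Hcond_uniform_continuity_classical {dA dB : ℕ}
    (α : ℝ) (hα : α ∈ Set.Ico (1/2 : ℝ) 1)
    (ε : ℝ) (hε : ε ∈ Set.Icc (0:ℝ) 1)
    (ρ σ : Matrix (Fin dA × Fin dB) (Fin dA × Fin dB) ℂ)
    (hρ : IsDensity ρ) (hσ : IsDensity σ)
    (hcl : (ClassicalA ρ ∧ ClassicalA σ) ∨ (ClassicalB ρ ∧ ClassicalB σ))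
    (hdist : (1/2) * traceNorm (ρ - σ) ≤ ε) :
    |Hcond α σ - Hcond α ρ| ≤
      Real.logb 2 (1 + ε) +
        (1/(1-α)) * Real.logb 2
          (1 + ε ^ α * (dA : ℝ) ^ (1-α) - ε / ((dA : ℝ) * (1+ε)) ^ (1-α)) := by
  simpa only [Fintype.card_fin] using
    Hcond_uniform_continuity_classical_general hα hρ hσ hcl hdist
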